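/- If Q is an extreme point of the convex set L (viewed as a subset of the real vector space of all maps X* → X*), then for every ω ∈ Ω the measure Qδ(ω) is a φ-ergodic Borel probability measure. -/

import Mathlib

open MeasureTheory Filter Topology

/-- The pairing `⟨f, μ⟩ = ∫ f dμ` of a function with a finite signed Borel measure,
defined via the Jordan decomposition of the signed measure. -/
noncomputable def spair {Ω : Type*} [MeasurableSpace Ω] (f : Ω → ℝ) (μ : SignedMeasure Ω) : ℝ :=
  (∫ ω, f ω ∂μ.toJordanDecomposition.posPart) - (∫ ω, f ω ∂μ.toJordanDecomposition.negPart)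

/-- The weak* topology on the space `X*` of finite signed Borel measures, i.e. the topology
of convergence of the pairings with all continuous functions `x ∈ C(Ω, ℝ)`. With this topology
on the codomain, the product topology on `SignedMeasure Ω → SignedMeasure Ω` is precisely the
weak* operator topology (pointwise convergence with `X*` in its weak* topology). -/
noncomputable instance weakStarTopology {Ω : Type*} [TopologicalSpace Ω] [MeasurableSpace Ω] :
    TopologicalSpace (SignedMeasure Ω) :=
  TopologicalSpace.induced (fun μ => fun x : C(Ω, ℝ) => spair (⇑x) μ) inferInstance

/-- The operator `V : X* → X*`, pushforward by `φ`: `(Vμ)(e) = μ(φ⁻¹ e)`. -/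
noncomputable def Vop {Ω : Type*} [MeasurableSpace Ω] (φ : Ω → Ω) :
    SignedMeasure Ω → SignedMeasure Ω :=
  fun μ => μ.map φ

/-- The Dirac measure at `ω`, as a signed measure. -/
noncomputable def diracSM {Ω : Type*} [MeasurableSpace Ω] (ω : Ω) : SignedMeasure Ω :=
  (Measure.dirac ω).toSignedMeasure

/-- `Γ(Ω,φ)`: the closure of `{Vⁿ : n ≥ 0}` in the weak* operator topology. -/
def GammaSG {Ω : Type*} [TopologicalSpace Ω] [MeasurableSpace Ω] (φ : Ω → Ω) :
    Set (SignedMeasure Ω → SignedMeasure Ω) :=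
  closure (Set.range fun n : ℕ => (Vop φ)^[n])

/-- `G(Ω,φ)`: the closure of the convex hull of `{Vⁿ : n ≥ 0}` in the weak* operator topology. -/
def GSG {Ω : Type*} [TopologicalSpace Ω] [MeasurableSpace Ω] (φ : Ω → Ω) :
    Set (SignedMeasure Ω → SignedMeasure Ω) :=
  closure (convexHull ℝ (Set.range fun n : ℕ => (Vop φ)^[n]))

/-- The kernel `L = {Q ∈ G(Ω,φ) : V ∘ Q = Q}` of the semigroup `G(Ω,φ)`. -/
def Lker {Ω : Type*} [TopologicalSpace Ω] [MeasurableSpace Ω] (φ : Ω → Ω) :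
    Set (SignedMeasure Ω → SignedMeasure Ω) :=
  {Q ∈ GSG φ | Vop φ ∘ Q = Q}

/-- The Ellis enveloping semigroup `E(Ω,φ)`: the closure of the iterates `{φⁿ : n ≥ 0}`
in the product topology (pointwise convergence) on `Ω → Ω`. -/
def EllisE {Ω : Type*} [TopologicalSpace Ω] (φ : Ω → Ω) : Set (Ω → Ω) :=
  closure (Set.range fun n : ℕ => φ^[n])

/-- `E_b(Ω,φ)`: the smallest set of self-maps of `Ω` containing the iterates `{φⁿ : n ≥ 0}`
and sequentially closed under pointwise convergence. -/
inductive Eb {Ω : Type*} [TopologicalSpace Ω] (φ : Ω → Ω) : (Ω → Ω) → Prop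
  | iterate (n : ℕ) : Eb φ φ^[n]
  | lim (p : ℕ → Ω → Ω) (q : Ω → Ω) (hp : ∀ k, Eb φ (p k))
      (hq : ∀ ω, Tendsto (fun k => p k ω) atTop (𝓝 (q ω))) : Eb φ q

/-- `E₁(Ω,φ)`: the set of pointwise limits of sequences of iterates `φ^{n_k}`. -/
def E1SG {Ω : Type*} [TopologicalSpace Ω] (φ : Ω → Ω) : Set (Ω → Ω) :=
  {p | ∃ n : ℕ → ℕ, ∀ ω, Tendsto (fun k => φ^[n k] ω) atTop (𝓝 (p ω))}

/-- An operator `P ∈ Γ(Ω,φ)` with `p = πP` is regular if `p` is Borel measurable and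
`(Pμ)(e) = μ(p⁻¹ e)` for every Borel probability measure `μ` and Borel set `e`. -/
def RegularOperator {Ω : Type*} [TopologicalSpace Ω] [MeasurableSpace Ω]
    (P : SignedMeasure Ω → SignedMeasure Ω) (p : Ω → Ω) : Prop :=
  Measurable p ∧ ∀ (μ : Measure Ω) [IsProbabilityMeasure μ],
    ∀ e : Set Ω, MeasurableSet e → P μ.toSignedMeasure e = (μ (p ⁻¹' e)).toReal

/-- A minimal set of the semicascade `(Ω,φ)`: a nonempty closed `φ`-invariant set containing
no proper nonempty closed `φ`-invariant subset. -/
def IsMinimalSet {Ω : Type*} [TopologicalSpace Ω] (φ : Ω → Ω) (m : Set Ω) : Prop :=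
  m.Nonempty ∧ IsClosed m ∧ Set.MapsTo φ m m ∧
    ∀ m' ⊆ m, m'.Nonempty → IsClosed m' → Set.MapsTo φ m' m' → m' = m

/-- The orbit closure of a point `ω`: the closure of the trajectory `{φⁿ ω : n ≥ 0}`. -/
def orbitClosure {Ω : Type*} [TopologicalSpace Ω] (φ : Ω → Ω) (ω : Ω) : Set Ω :=
  closure (Set.range fun n : ℕ => φ^[n] ω)

/-- A `φ`-ergodic measure: a `φ`-invariant Borel probability measure `μ` such that
`μ(e) ∈ {0,1}` for every Borel set `e` with `φ⁻¹ e = e`. -/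
def IsErgodicMeasure {Ω : Type*} [MeasurableSpace Ω] (φ : Ω → Ω) (μ : Measure Ω) : Prop :=
  IsProbabilityMeasure μ ∧ (∀ e : Set Ω, MeasurableSet e → μ (φ ⁻¹' e) = μ e) ∧
    (∀ e : Set Ω, MeasurableSet e → φ ⁻¹' e = e → μ e = 0 ∨ μ e = 1)

/-- The support of a Borel measure: the smallest closed set of full measure
(the intersection of all closed sets of full measure). -/
def msupp {Ω : Type*} [TopologicalSpace Ω] [MeasurableSpace Ω] (μ : Measure Ω) : Set Ω :=
  ⋂₀ {s : Set Ω | IsClosed s ∧ μ sᶜ = 0}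

/-- The semicascade `(Ω,φ)` is tame: for every continuous `x` and every strictly increasing
sequence `n(1) < n(2) < ⋯`, the infimum over finitely supported real coefficients `a` with
`Σ|aₖ| = 1` of the sup-norms `‖Σₖ aₖ · (x ∘ φ^{n(k)})‖` is `0`. -/
def Tame {Ω : Type*} [TopologicalSpace Ω] [CompactSpace Ω] (φ : Ω → Ω)
    (hφ : Continuous φ) : Prop :=
  ∀ (x : C(Ω, ℝ)) (n : ℕ → ℕ), StrictMono n →
    sInf {r : ℝ | ∃ a : ℕ →₀ ℝ, (∑ k ∈ a.support, |a k|) = 1 ∧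
      r = ‖∑ k ∈ a.support, a k • x.comp ⟨φ^[n k], hφ.iterate (n k)⟩‖} = 0

/-- Points `a, b` are proximal: `inf_{n ≥ 0} d(φⁿ a, φⁿ b) = 0`. -/
def Proximal {Ω : Type*} [PseudoMetricSpace Ω] (φ : Ω → Ω) (a b : Ω) : Prop :=
  (⨅ n : ℕ, dist (φ^[n] a) (φ^[n] b)) = 0

variable {Ω : Type*} [TopologicalSpace Ω] [CompactSpace Ω] [TopologicalSpace.MetrizableSpace Ω]
  [Nonempty Ω] [MeasurableSpace Ω] [BorelSpace Ω]


section Helpers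
set_option linter.all false

open scoped BoundedContinuousFunction

lemma cint (x : C(Ω, ℝ)) (μ : Measure Ω) [IsFiniteMeasure μ] : Integrable x μ :=
  (BoundedContinuousFunction.mkOfCompact x).integrable μ

lemma spair_eq (a b : Measure Ω) [IsFiniteMeasure a] [IsFiniteMeasure b] (x : C(Ω, ℝ)) :
    spair x (a.toSignedMeasure - b.toSignedMeasure) = (∫ w, x w ∂a) - ∫ w, x w ∂b := by
  set μ := a.toSignedMeasure - b.toSignedMeasure with hμ
  have h := μ.toSignedMeasure_toJordanDecomposition
  unfold JordanDecomposition.toSignedMeasure at h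
  have h2 : (μ.toJordanDecomposition.posPart + b).toSignedMeasure
      = (a + μ.toJordanDecomposition.negPart).toSignedMeasure := by
    rw [Measure.toSignedMeasure_add, Measure.toSignedMeasure_add, ← sub_eq_sub_iff_add_eq_add, h]
  rw [Measure.toSignedMeasure_eq_toSignedMeasure_iff] at h2
  have h3 : ∫ w, x w ∂(μ.toJordanDecomposition.posPart + b)
    = ∫ w, x w ∂(a + μ.toJordanDecomposition.negPart) := by rw [h2]
  rw [integral_add_measure (cint _ _) (cint _ _), integral_add_measure (cint _ _) (cint _ _)] at h3
  unfold spair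
  linarith

lemma exists_sub (μ : SignedMeasure Ω) : ∃ (a b : Measure Ω) (_ : IsFiniteMeasure a)
    (_ : IsFiniteMeasure b), μ = a.toSignedMeasure - b.toSignedMeasure :=
  ⟨μ.toJordanDecomposition.posPart, μ.toJordanDecomposition.negPart, inferInstance, inferInstance,
    μ.toSignedMeasure_toJordanDecomposition.symm⟩

lemma spair_toSM (a : Measure Ω) [IsFiniteMeasure a] (x : C(Ω, ℝ)) :
    spair x a.toSignedMeasure = ∫ w, x w ∂a := by
  have := spair_eq a 0 x
  simpa using this

lemma spair_add (x : C(Ω, ℝ)) (μ ν : SignedMeasure Ω) :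
    spair x (μ + ν) = spair x μ + spair x ν := by
  obtain ⟨a, b, _, _, rfl⟩ := exists_sub μ
  obtain ⟨c, d, _, _, rfl⟩ := exists_sub ν
  have : a.toSignedMeasure - b.toSignedMeasure + (c.toSignedMeasure - d.toSignedMeasure)
    = (a + c).toSignedMeasure - (b + d).toSignedMeasure := by
    rw [Measure.toSignedMeasure_add, Measure.toSignedMeasure_add]; abel
  rw [this, spair_eq, spair_eq, spair_eq, integral_add_measure (cint _ _) (cint _ _),
    integral_add_measure (cint _ _) (cint _ _)]
  ring

lemma spair_smul (x : C(Ω, ℝ)) (r : ℝ) (μ : SignedMeasure Ω) :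
    spair x (r • μ) = r * spair x μ := by
  obtain ⟨a, b, _, _, rfl⟩ := exists_sub μ
  rcases le_total 0 r with h | h
  · lift r to NNReal using h
    have : (r : ℝ) • (a.toSignedMeasure - b.toSignedMeasure)
      = (r • a).toSignedMeasure - (r • b).toSignedMeasure := by
      rw [Measure.toSignedMeasure_smul, Measure.toSignedMeasure_smul, smul_sub]; rfl
    rw [this, spair_eq, spair_eq, integral_smul_nnreal_measure, integral_smul_nnreal_measure]
    simp only [NNReal.smul_def, smul_eq_mul]; ring
  · obtain ⟨s, rfl⟩ : ∃ s, r = -s := ⟨-r, by simp⟩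
    have h : 0 ≤ s := by linarith
    lift s to NNReal using h
    have : (-(s : ℝ)) • (a.toSignedMeasure - b.toSignedMeasure)
      = (s • b).toSignedMeasure - (s • a).toSignedMeasure := by
      rw [Measure.toSignedMeasure_smul, Measure.toSignedMeasure_smul]
      ext i hi
      simp [NNReal.smul_def, hi]
      ring
    rw [this, spair_eq, spair_eq, integral_smul_nnreal_measure, integral_smul_nnreal_measure]
    simp only [NNReal.smul_def, smul_eq_mul]; ring

lemma spair_Vop (φ : C(Ω, Ω)) (x : C(Ω, ℝ)) (μ : SignedMeasure Ω) :
    spair x (Vop φ μ) = spair (x.comp φ) μ := by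
  obtain ⟨a, b, _, _, rfl⟩ := exists_sub μ
  have hm : Measurable φ := φ.continuous.measurable
  have : Vop φ (a.toSignedMeasure - b.toSignedMeasure)
      = (a.map φ).toSignedMeasure - (b.map φ).toSignedMeasure := by
    ext i hi
    simp [Vop, VectorMeasure.map_apply _ hm hi, hi, hm hi, Measure.toSignedMeasure_apply,
      Measure.real, Measure.map_apply hm hi]
  rw [this, spair_eq, spair_eq, integral_map hm.aemeasurable, integral_map hm.aemeasurable]
  · rfl
  · exact x.continuous.measurable.aestronglyMeasurable
  · exact x.continuous.measurable.aestronglyMeasurable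

lemma meas_ext (a b : Measure Ω) [IsFiniteMeasure a] [IsFiniteMeasure b]
    (h : ∀ x : C(Ω, ℝ), ∫ w, x w ∂a = ∫ w, x w ∂b) : a = b := by
  letI := TopologicalSpace.metrizableSpaceMetric Ω
  exact ext_of_forall_integral_eq_of_IsFiniteMeasure fun f => h f.toContinuousMap

lemma spair_ext (μ ν : SignedMeasure Ω) (h : ∀ x : C(Ω, ℝ), spair x μ = spair x ν) : μ = ν := by
  obtain ⟨a, b, _, _, rfl⟩ := exists_sub μ
  obtain ⟨c, d, _, _, rfl⟩ := exists_sub ν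
  have : a + d = c + b := by
    refine meas_ext _ _ fun x => ?_
    have := h x
    rw [spair_eq, spair_eq] at this
    rw [integral_add_measure (cint _ _) (cint _ _), integral_add_measure (cint _ _) (cint _ _)]
    linarith
  rw [sub_eq_sub_iff_add_eq_add, ← Measure.toSignedMeasure_add, ← Measure.toSignedMeasure_add]
  exact Measure.toSignedMeasure_congr this

lemma riesz (Λ : C(Ω, ℝ) →ₗ[ℝ] ℝ) (h : ∀ x : C(Ω, ℝ), 0 ≤ x → 0 ≤ Λ x) :
    ∃ (a : Measure Ω) (_ : IsFiniteMeasure a), ∀ x : C(Ω, ℝ), ∫ w, x w ∂a = Λ x := by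
  let L : CompactlySupportedContinuousMap Ω ℝ →ₗ[ℝ] ℝ :=
    { toFun := fun f => Λ f.toContinuousMap
      map_add' := fun f g => Λ.map_add f.toContinuousMap g.toContinuousMap
      map_smul' := fun r f => Λ.map_smul r f.toContinuousMap }
  let L' := PositiveLinearMap.mk₀ L (fun f hf => h _ hf)
  have key : ∀ x : C(Ω, ℝ), ∫ w, x w ∂(RealRMK.rieszMeasure L') = Λ x := fun x =>
    RealRMK.integral_rieszMeasure L' (CompactlySupportedContinuousMap.continuousMapEquiv x)
  refine ⟨RealRMK.rieszMeasure L', ⟨?_⟩, key⟩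
  have := RealRMK.rieszMeasure_le_of_eq_one L' (f := CompactlySupportedContinuousMap.continuousMapEquiv 1) (fun x => zero_le_one) (K := Set.univ) isCompact_univ (fun x _ => rfl)
  exact this.trans_lt ENNReal.ofReal_lt_top

structure IsPosF (M : (ℕ →ᵇ ℝ) → ℝ) : Prop where
  add : ∀ f g, M (f + g) = M f + M g
  smul : ∀ (r : ℝ) f, M (r • f) = r * M f
  nonneg : ∀ f, 0 ≤ f → 0 ≤ M f

lemma IsPosF.sub {M : (ℕ →ᵇ ℝ) → ℝ} (h : IsPosF M) (f g) : M (f - g) = M f - M g := by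
  have := h.add (f - g) g
  simp only [sub_add_cancel] at this
  linarith

lemma IsPosF.mono {M : (ℕ →ᵇ ℝ) → ℝ} (h : IsPosF M) {f g : ℕ →ᵇ ℝ} (hfg : ∀ n, f n ≤ g n) :
    M f ≤ M g := by
  have := h.nonneg (g - f) (fun n => by simpa using hfg n)
  rw [h.sub] at this
  linarith

lemma IsPosF.abs_le_of {M : (ℕ →ᵇ ℝ) → ℝ} (h : IsPosF M) {f g : ℕ →ᵇ ℝ} (C : ℝ)
    (hfg : ∀ n, |f n| ≤ C * g n) : |M f| ≤ C * M g := by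
  rw [abs_le, ← neg_mul, ← h.smul, ← h.smul]
  constructor
  · exact h.mono fun n => by have := (abs_le.1 (hfg n)).1; simpa using this
  · exact h.mono fun n => by have := (abs_le.1 (hfg n)).2; simpa using this

lemma IsPosF.abs_le {M : (ℕ →ᵇ ℝ) → ℝ} (h : IsPosF M) (f : ℕ →ᵇ ℝ) : |M f| ≤ ‖f‖ * M 1 :=
  h.abs_le_of _ fun n => by simpa using f.norm_coe_le_norm n

lemma exists_ulim {ι : Type*} (U : Ultrafilter ι) (F : ι → (ℕ →ᵇ ℝ) → ℝ)
    (C : (ℕ →ᵇ ℝ) → ℝ) (h : ∀ᶠ i in (U : Filter ι), ∀ f, |F i f| ≤ C f) :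
    ∃ N : (ℕ →ᵇ ℝ) → ℝ, ∀ f, Tendsto (fun i => F i f) U (𝓝 (N f)) := by
  have : ∀ f, ∃ r, Tendsto (fun i => F i f) U (𝓝 r) := fun f => by
    obtain ⟨r, -, hr⟩ := (isCompact_Icc (a := -C f) (b := C f)).ultrafilter_le_nhds
      (U.map fun i => F i f) (by
        rw [le_principal_iff]
        exact h.mono fun i hi => abs_le.1 (hi f))
    exact ⟨r, hr⟩
  choose N hN using this
  exact ⟨N, hN⟩

lemma ulim_posF {ι : Type*} (U : Ultrafilter ι) (F : ι → (ℕ →ᵇ ℝ) → ℝ)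
    (h : ∀ᶠ i in (U : Filter ι), IsPosF (F i)) (N : (ℕ →ᵇ ℝ) → ℝ)
    (hN : ∀ f, Tendsto (fun i => F i f) U (𝓝 (N f))) : IsPosF N where
  add f g := tendsto_nhds_unique (hN (f + g)) (((hN f).add (hN g)).congr'
    (h.mono fun i hi => (hi.add f g).symm))
  smul r f := tendsto_nhds_unique (hN (r • f)) (((hN f).const_mul r).congr'
    (h.mono fun i hi => (hi.smul r f).symm))
  nonneg f hf := ge_of_tendsto (hN f) (h.mono fun i hi => hi.nonneg f hf)

noncomputable def shB (f : ℕ →ᵇ ℝ) : ℕ →ᵇ ℝ :=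
  f.compContinuous ⟨fun n => n + 1, continuous_of_discreteTopology⟩

@[simp] lemma shB_apply (f : ℕ →ᵇ ℝ) (n : ℕ) : shB f n = f (n + 1) := rfl

/-- Cesàro: any mean can be averaged into a shift-invariant mean, not changing
the values on functions on which it was already invariant. -/
lemma cesaro (M : (ℕ →ᵇ ℝ) → ℝ) (hM : IsPosF M) (h1 : M 1 = 1) :
    ∃ N, IsPosF N ∧ N 1 = 1 ∧ (∀ f, N (shB f) = N f) ∧
      ∀ f, (∀ k, M (shB^[k] f) = M f) → N f = M f := by
  have sadd : ∀ f g, shB (f + g) = shB f + shB g := fun f g => rfl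
  have ssmul : ∀ (r : ℝ) f, shB (r • f) = r • shB f := fun f g => rfl
  have sone : shB 1 = 1 := rfl
  have hk1 : ∀ k, shB^[k] 1 = 1 := fun k => by
    induction k with
    | zero => rfl
    | succ k ih => rw [Function.iterate_succ_apply', ih, sone]
  have hpos : ∀ k, IsPosF (fun f => M (shB^[k] f)) := fun k => by
    induction k with
    | zero => exact hM
    | succ k ih =>
      refine ⟨fun f g => ?_, fun r f => ?_, fun f hf => ?_⟩
      · simp only [Function.iterate_succ_apply]; exact ih.add (shB f) (shB g)
      · simp only [Function.iterate_succ_apply]; exact ih.smul r (shB f)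
      · simp only [Function.iterate_succ_apply]; exact ih.nonneg _ (fun n => hf (n + 1))
  let F : ℕ → (ℕ →ᵇ ℝ) → ℝ := fun n f => (∑ k ∈ Finset.range (n + 1), M (shB^[k] f)) / (n + 1)
  have hF : ∀ n, IsPosF (F n) := fun n => by
    refine ⟨fun f g => ?_, fun r f => ?_, fun f hf => ?_⟩
    · simp only [F]
      rw [Finset.sum_congr rfl (fun k _ => (hpos k).add f g), Finset.sum_add_distrib, add_div]
    · simp only [F]
      rw [Finset.sum_congr rfl (fun k _ => (hpos k).smul r f), ← Finset.mul_sum, mul_div_assoc]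
    · exact div_nonneg (Finset.sum_nonneg fun k _ => (hpos k).nonneg f hf) (by positivity)
  have hFc : ∀ n f, (∀ k, M (shB^[k] f) = M f) → F n f = M f := fun n f h => by
    simp only [F, h, Finset.sum_const, Finset.card_range, nsmul_eq_mul]
    push_cast
    field_simp
  have hF1 : ∀ n, F n 1 = 1 := fun n => by
    rw [hFc n 1 (fun k => by rw [hk1]), h1]
  obtain ⟨N, hN⟩ := exists_ulim (hyperfilter ℕ) F (fun f => ‖f‖) (Eventually.of_forall
    fun n f => by have := (hF n).abs_le f; rwa [hF1, mul_one] at this)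
  refine ⟨N, ulim_posF _ F (Eventually.of_forall hF) N hN, ?_, fun f => ?_, fun f hf => ?_⟩
  · exact tendsto_nhds_unique (hN 1) (by simp only [hF1]; exact tendsto_const_nhds)
  · have h0 : Tendsto (fun n => F n (shB f) - F n f) (hyperfilter ℕ) (𝓝 0) := by
      have hb : ∀ n, |F n (shB f) - F n f| ≤ 2 * ‖f‖ * (1 / ((n : ℝ) + 1)) := fun n => by
        have : F n (shB f) - F n f = (M (shB^[n+1] f) - M f) / (n + 1) := by
          simp only [F]
          rw [← sub_div, ← Finset.sum_sub_distrib]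
          congr 1
          have := Finset.sum_range_sub (fun k => M (shB^[k] f)) (n + 1)
          simpa only [Function.iterate_succ_apply, Function.iterate_zero, id] using this
        have a1 := (hpos (n+1)).abs_le f
        have a2 := hM.abs_le f
        simp only [hk1, h1, mul_one] at a1 a2
        rw [this, abs_div, abs_of_pos (a := (n : ℝ) + 1) (by positivity), mul_one_div]
        gcongr
        have := abs_sub (M (shB^[n+1] f)) (M f)
        linarith
      refine (squeeze_zero_norm hb ?_).mono_left Nat.hyperfilter_le_atTop
      have := (tendsto_one_div_add_atTop_nhds_zero_nat (𝕜 := ℝ)).const_mul (2 * ‖f‖)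
      simpa using this
    have h2 := tendsto_nhds_unique h0 ((hN (shB f)).sub (hN f))
    linarith
  · exact tendsto_nhds_unique (hN f) (by simp only [hFc _ f hf]; exact tendsto_const_nhds)

lemma spair_iter (φ : C(Ω, Ω)) (n : ℕ) (x : C(Ω, ℝ)) (μ : SignedMeasure Ω) :
    spair x ((Vop φ)^[n] μ) = spair (x.comp ⟨φ^[n], φ.continuous.iterate n⟩) μ := by
  induction n generalizing x with
  | zero => rfl
  | succ n ih =>
    rw [Function.iterate_succ_apply', spair_Vop, ih]
    congr 1
    ext w
    simp only [ContinuousMap.comp_apply, ContinuousMap.coe_mk, Function.iterate_succ_apply']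

lemma spair_bound (x : C(Ω, ℝ)) (μ : SignedMeasure Ω) :
    |spair x μ| ≤ ‖x‖ * (μ.toJordanDecomposition.posPart.real Set.univ +
      μ.toJordanDecomposition.negPart.real Set.univ) := by
  have h : ∀ (a : Measure Ω) [IsFiniteMeasure a], |∫ w, x w ∂a| ≤ ‖x‖ * a.real Set.univ :=
    fun a _ => norm_integral_le_of_norm_le_const (Eventually.of_forall fun w => x.norm_coe_le_norm w)
  unfold spair
  have := abs_sub (∫ ω, x ω ∂μ.toJordanDecomposition.posPart)
    (∫ ω, x ω ∂μ.toJordanDecomposition.negPart)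
  have h1 := h μ.toJordanDecomposition.posPart
  have h2 := h μ.toJordanDecomposition.negPart
  linarith

lemma fB_bound (φ : C(Ω, Ω)) (μ : SignedMeasure Ω) (x : C(Ω, ℝ)) (n : ℕ) :
    ‖spair x ((Vop φ)^[n] μ)‖ ≤ ‖x‖ * (μ.toJordanDecomposition.posPart.real Set.univ +
      μ.toJordanDecomposition.negPart.real Set.univ) := by
  rw [spair_iter]
  refine (spair_bound _ μ).trans ?_
  gcongr
  rw [ContinuousMap.norm_le _ (norm_nonneg _)]
  exact fun w => x.norm_coe_le_norm _

noncomputable def fB (φ : C(Ω, Ω)) (μ : SignedMeasure Ω) (x : C(Ω, ℝ)) : ℕ →ᵇ ℝ :=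
  BoundedContinuousFunction.ofNormedAddCommGroup (fun n => spair x ((Vop φ)^[n] μ))
    continuous_of_discreteTopology _ (fB_bound φ μ x)

@[simp] lemma fB_apply (φ : C(Ω, Ω)) (μ : SignedMeasure Ω) (x : C(Ω, ℝ)) (n : ℕ) :
    fB φ μ x n = spair x ((Vop φ)^[n] μ) := rfl

lemma fB_comp (φ : C(Ω, Ω)) (μ : SignedMeasure Ω) (x : C(Ω, ℝ)) :
    fB φ μ (x.comp φ) = shB (fB φ μ x) := by
  ext n
  rw [shB_apply, fB_apply, fB_apply, Function.iterate_succ_apply', spair_Vop]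

lemma fB_measure (φ : C(Ω, Ω)) (a : Measure Ω) [IsFiniteMeasure a] (x : C(Ω, ℝ)) (n : ℕ) :
    fB φ a.toSignedMeasure x n = ∫ w, x (φ^[n] w) ∂a := by
  rw [fB_apply, spair_iter, spair_toSM]
  rfl

lemma Vop_iter_sub (φ : C(Ω, Ω)) (n : ℕ) (μ ν : SignedMeasure Ω) (x : C(Ω, ℝ)) :
    spair x ((Vop φ)^[n] (μ - ν)) = spair x ((Vop φ)^[n] μ) - spair x ((Vop φ)^[n] ν) := by
  rw [spair_iter, spair_iter, spair_iter, eq_sub_iff_add_eq, ← spair_add, sub_add_cancel]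

lemma exists_op_measure (φ : C(Ω, Ω)) (M : (ℕ →ᵇ ℝ) → ℝ) (hM : IsPosF M) (a : Measure Ω)
    [IsFiniteMeasure a] : ∃ (b : Measure Ω) (_ : IsFiniteMeasure b), ∀ x : C(Ω, ℝ),
      ∫ w, x w ∂b = M (fB φ a.toSignedMeasure x) := by
  have ci : ∀ (x : C(Ω, ℝ)) n, Integrable (fun w => x (φ^[n] w)) a := fun x n =>
    cint (x.comp ⟨φ^[n], φ.continuous.iterate n⟩) a
  let Λ : C(Ω, ℝ) →ₗ[ℝ] ℝ :=
    { toFun := fun x => M (fB φ a.toSignedMeasure x)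
      map_add' := fun x y => by
        rw [← hM.add]
        congr 1
        ext n
        simp only [fB_measure, BoundedContinuousFunction.coe_add, Pi.add_apply,
          ContinuousMap.add_apply]
        exact integral_add (ci x n) (ci y n)
      map_smul' := fun r x => by
        rw [RingHom.id_apply, smul_eq_mul, ← hM.smul]
        congr 1
        ext n
        simp only [fB_measure, BoundedContinuousFunction.coe_smul,
          ContinuousMap.smul_apply, smul_eq_mul]
        exact integral_const_mul _ _ }
  exact riesz Λ fun x hx => hM.nonneg _ fun n => by
    have h := fB_measure φ a x n
    have h2 : 0 ≤ ∫ w, x (φ^[n] w) ∂a := integral_nonneg fun w => hx _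
    rw [← h] at h2; exact h2

lemma exists_op (φ : C(Ω, Ω)) (M : (ℕ →ᵇ ℝ) → ℝ) (hM : IsPosF M) :
    ∃ T : SignedMeasure Ω → SignedMeasure Ω, ∀ μ (x : C(Ω, ℝ)),
      spair x (T μ) = M (fB φ μ x) := by
  have : ∀ μ : SignedMeasure Ω, ∃ ν : SignedMeasure Ω, ∀ (x : C(Ω, ℝ)),
      spair x ν = M (fB φ μ x) := fun μ => by
    obtain ⟨a, b, _, _, rfl⟩ := exists_sub μ
    obtain ⟨a', _, ha⟩ := exists_op_measure φ M hM a
    obtain ⟨b', _, hb⟩ := exists_op_measure φ M hM b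
    refine ⟨a'.toSignedMeasure - b'.toSignedMeasure, fun x => ?_⟩
    rw [spair_eq, ha, hb, ← hM.sub]
    congr 1
    ext n
    simp only [fB_apply, BoundedContinuousFunction.coe_sub, Pi.sub_apply, Vop_iter_sub]
  choose T hT using this
  exact ⟨T, hT⟩

noncomputable def Jl (Ω : Type*) [TopologicalSpace Ω] [CompactSpace Ω]
    [TopologicalSpace.MetrizableSpace Ω] [Nonempty Ω] [MeasurableSpace Ω] [BorelSpace Ω] :
    (SignedMeasure Ω → SignedMeasure Ω) →ₗ[ℝ] (SignedMeasure Ω × C(Ω, ℝ) → ℝ) where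
  toFun T p := spair p.2 (T p.1)
  map_add' S T := by ext p; exact spair_add _ _ _
  map_smul' r T := by ext p; exact spair_smul _ _ _

lemma isInducing_Jl : Topology.IsInducing (Jl Ω) := by
  constructor
  change (⨅ μ, TopologicalSpace.induced _ (TopologicalSpace.induced _ (⨅ x, TopologicalSpace.induced _ _)))
    = TopologicalSpace.induced _ (⨅ p, TopologicalSpace.induced _ _)
  simp only [induced_iInf, induced_compose, iInf_prod]
  rfl

lemma exists_mean (φ : C(Ω, Ω)) (T : SignedMeasure Ω → SignedMeasure Ω) (hT : T ∈ GSG φ) :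
    ∃ M, IsPosF M ∧ M 1 = 1 ∧ ∀ μ (x : C(Ω, ℝ)), spair x (T μ) = M (fB φ μ x) := by
  let S : Set (SignedMeasure Ω → SignedMeasure Ω) :=
    {T | ∃ M, IsPosF M ∧ M 1 = 1 ∧ ∀ μ (x : C(Ω, ℝ)), spair x (T μ) = M (fB φ μ x)}
  have hS : convexHull ℝ (Set.range fun n : ℕ => (Vop φ)^[n]) ⊆ S := by
    refine convexHull_min ?_ ?_
    · rintro _ ⟨n, rfl⟩
      exact ⟨fun f => f n, ⟨fun f g => rfl, fun r f => rfl, fun f hf => hf n⟩, rfl, fun μ x => rfl⟩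
    · rintro T₁ ⟨M₁, p₁, o₁, h₁⟩ T₂ ⟨M₂, p₂, o₂, h₂⟩ a b ha hb hab
      refine ⟨fun f => a * M₁ f + b * M₂ f, ⟨fun f g => ?_, fun r f => ?_, fun f hf => ?_⟩, ?_,
        fun μ x => ?_⟩
      · simp only [p₁.add, p₂.add]; ring
      · simp only [p₁.smul, p₂.smul]; ring
      · exact add_nonneg (mul_nonneg ha (p₁.nonneg f hf)) (mul_nonneg hb (p₂.nonneg f hf))
      · simp only [o₁, o₂]; linarith
      · change spair x (a • T₁ μ + b • T₂ μ) = _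
        rw [spair_add, spair_smul, spair_smul, h₁, h₂]
  obtain ⟨U, hU, hUT⟩ := mem_closure_iff_ultrafilter.1 hT
  classical
  have hch : ∀ T : SignedMeasure Ω → SignedMeasure Ω, ∃ M, T ∈ S → IsPosF M ∧ M 1 = 1 ∧
      ∀ μ (x : C(Ω, ℝ)), spair x (T μ) = M (fB φ μ x) := fun T => by
    by_cases h : T ∈ S
    · obtain ⟨M, hM⟩ := h
      exact ⟨M, fun _ => hM⟩
    · exact ⟨0, fun h' => absurd h' h⟩
  choose F hF using hch
  have hev : ∀ᶠ T in (U : Filter _), T ∈ S := mem_of_superset hU hS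
  obtain ⟨N, hN⟩ := exists_ulim U F (fun f => ‖f‖) (hev.mono fun T hT f => by
    obtain ⟨p, o, -⟩ := hF T hT
    have := p.abs_le f
    rwa [o, mul_one] at this)
  refine ⟨N, ulim_posF U F (hev.mono fun T hT => (hF T hT).1) N hN, ?_, fun μ x => ?_⟩
  · exact tendsto_nhds_unique (hN 1) (tendsto_const_nhds.congr'
      (hev.mono fun T hT => (hF T hT).2.1.symm))
  · have h1 : Tendsto (fun T => Jl Ω T (μ, x)) (U : Filter _) (𝓝 (Jl Ω T (μ, x))) :=
      (((continuous_apply (μ, x)).comp isInducing_Jl.continuous).tendsto T).mono_left hUT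
    exact tendsto_nhds_unique h1 ((hN (fB φ μ x)).congr'
      (hev.mono fun T hT => ((hF T hT).2.2 μ x).symm))

lemma mem_G (φ : C(Ω, Ω)) (M : (ℕ →ᵇ ℝ) → ℝ) (hM : IsPosF M) (h1 : M 1 = 1)
    (T : SignedMeasure Ω → SignedMeasure Ω)
    (hT : ∀ μ (x : C(Ω, ℝ)), spair x (T μ) = M (fB φ μ x)) : T ∈ GSG φ := by
  unfold GSG
  rw [isInducing_Jl.closure_eq_preimage_closure_image, Set.mem_preimage]
  by_contra hcon
  obtain ⟨F, u, hFu, hF⟩ := geometric_hahn_banach_closed_point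
    (((convex_convexHull ℝ _).linear_image (Jl Ω)).closure) isClosed_closure hcon
  have hspan : (F : (SignedMeasure Ω × C(Ω, ℝ) → ℝ) →ₗ[ℝ] ℝ) ∈ Submodule.span ℝ
      (Set.range fun p : SignedMeasure Ω × C(Ω, ℝ) => (LinearMap.proj p :
        (SignedMeasure Ω × C(Ω, ℝ) → ℝ) →ₗ[ℝ] ℝ)) := by
    rw [LinearMap.mem_span_iff_continuous]
    exact F.continuous
  have key : ∃ h : ℕ →ᵇ ℝ, (∀ n, h n = F (Jl Ω ((Vop φ)^[n]))) ∧ M h = F (Jl Ω T) := by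
    change ∃ h : ℕ →ᵇ ℝ, (∀ n, h n = (F : (SignedMeasure Ω × C(Ω, ℝ) → ℝ) →ₗ[ℝ] ℝ)
      (Jl Ω ((Vop φ)^[n]))) ∧ M h = (F : (SignedMeasure Ω × C(Ω, ℝ) → ℝ) →ₗ[ℝ] ℝ) (Jl Ω T)
    generalize (F : (SignedMeasure Ω × C(Ω, ℝ) → ℝ) →ₗ[ℝ] ℝ) = F' at hspan ⊢
    induction hspan using Submodule.span_induction with
    | mem G hG =>
      obtain ⟨p, rfl⟩ := hG
      exact ⟨fB φ p.1 p.2, fun n => rfl, (hT _ _).symm⟩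
    | zero => exact ⟨0, fun n => rfl, by have := hM.smul 0 0; simpa using this⟩
    | add G H _ _ hG hH =>
      obtain ⟨g, g1, g2⟩ := hG
      obtain ⟨h, h1, h2⟩ := hH
      exact ⟨g + h, fun n => by simp [g1, h1], by rw [hM.add, g2, h2]; rfl⟩
    | smul r G _ hG =>
      obtain ⟨g, g1, g2⟩ := hG
      exact ⟨r • g, fun n => by simp [g1], by rw [hM.smul, g2]; rfl⟩
  obtain ⟨h, hn, hMh⟩ := key
  have : M h ≤ M (u • 1) := hM.mono fun n => by
    rw [hn]
    have := hFu _ (subset_closure (Set.mem_image_of_mem (Jl Ω)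
      (subset_convexHull ℝ _ (Set.mem_range_self n))))
    simpa using this.le
  rw [hM.smul, h1, hMh] at this
  linarith

lemma mem_L (φ : C(Ω, Ω)) (M : (ℕ →ᵇ ℝ) → ℝ) (hM : IsPosF M) (h1 : M 1 = 1)
    (hinv : ∀ f, M (shB f) = M f) :
    ∃ T ∈ Lker φ, ∀ μ (x : C(Ω, ℝ)), spair x (T μ) = M (fB φ μ x) := by
  obtain ⟨T, hT⟩ := exists_op φ M hM
  refine ⟨T, ⟨mem_G φ M hM h1 T hT, ?_⟩, hT⟩
  funext μ
  refine spair_ext _ _ fun x => ?_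
  rw [Function.comp_apply, spair_Vop, hT, hT, fB_comp, hinv]

lemma fB_iter (φ : C(Ω, Ω)) (μ : SignedMeasure Ω) (k : ℕ) (x : C(Ω, ℝ)) :
    ∃ y : C(Ω, ℝ), shB^[k] (fB φ μ x) = fB φ μ y := by
  induction k generalizing x with
  | zero => exact ⟨x, rfl⟩
  | succ k ih => rw [Function.iterate_succ_apply, ← fB_comp]; exact ih _

lemma exists_inv_mean (φ : C(Ω, Ω)) (T : SignedMeasure Ω → SignedMeasure Ω) (hT : T ∈ Lker φ) :
    ∃ M, IsPosF M ∧ M 1 = 1 ∧ (∀ f, M (shB f) = M f) ∧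
      ∀ μ (x : C(Ω, ℝ)), spair x (T μ) = M (fB φ μ x) := by
  obtain ⟨M, hM, h1, h⟩ := exists_mean φ T hT.1
  obtain ⟨N, hN, hN1, hNs, hNM⟩ := cesaro M hM h1
  refine ⟨N, hN, hN1, hNs, fun μ x => ?_⟩
  rw [hNM, h]
  intro k
  induction k with
  | zero => rfl
  | succ k ih =>
    rw [← ih, Function.iterate_succ_apply']
    obtain ⟨y, hy⟩ := fB_iter φ μ k x
    rw [hy, ← fB_comp, ← h, ← h, ← spair_Vop]
    have : Vop φ (T μ) = T μ := congrFun hT.2 μ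
    rw [this]

lemma fB_dirac (φ : C(Ω, Ω)) (ω : Ω) (x : C(Ω, ℝ)) (n : ℕ) :
    fB φ (diracSM ω) x n = x (φ^[n] ω) := by
  unfold diracSM
  rw [fB_measure, integral_dirac]

lemma exists_approx (μ : Measure Ω) [IsFiniteMeasure μ] (e : Set Ω) (he : MeasurableSet e)
    (ε : ℝ) (hε : 0 < ε) : ∃ x : C(Ω, ℝ), (∀ w, 0 ≤ x w) ∧ (∀ w, x w ≤ 1) ∧
      ∫ w, |e.indicator (fun _ => (1 : ℝ)) w - x w| ∂μ ≤ ε := by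
  letI := TopologicalSpace.metrizableSpaceMetric Ω
  have hi : Integrable (e.indicator (fun _ => (1 : ℝ))) μ := (integrable_const 1).indicator he
  obtain ⟨g, hg, hgi⟩ := hi.exists_boundedContinuous_integral_sub_le hε
  refine ⟨⟨fun w => max 0 (min 1 (g w)), by fun_prop⟩, fun w => le_max_left _ _,
    fun w => max_le zero_le_one (min_le_left _ _), le_trans ?_ hg⟩
  refine integral_mono (hi.sub (cint _ _)).abs (hi.sub hgi).abs fun w => ?_
  by_cases hw : w ∈ e
  · simp only [Set.indicator_of_mem hw, Pi.sub_apply, ContinuousMap.coe_mk, Real.norm_eq_abs]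
    rcases le_total 1 (g w) with h | h
    · rw [min_eq_left h]; simp
    · rw [min_eq_right h]
      rcases le_total 0 (g w) with h' | h'
      · rw [max_eq_right h']
      · rw [max_eq_left h', abs_of_nonneg (by linarith), abs_of_nonneg (by linarith)]; linarith
  · simp only [Set.indicator_of_notMem hw, Pi.sub_apply, ContinuousMap.coe_mk, Real.norm_eq_abs,
      zero_sub, abs_neg]
    rcases le_total 0 (g w) with h' | h'
    · rw [abs_of_nonneg h', abs_of_nonneg (le_max_left _ _)]
      exact max_le h' (min_le_right _ _)
    · rw [max_eq_left ((min_le_right _ _).trans h')]; simp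

lemma split_mean (φ : C(Ω, Ω)) (ω : Ω) (M : (ℕ →ᵇ ℝ) → ℝ) (hM : IsPosF M) (h1 : M 1 = 1)
    (hinv : ∀ f, M (shB f) = M f) (μ : Measure Ω) [IsFiniteMeasure μ]
    (hμ : ∀ x : C(Ω, ℝ), ∫ w, x w ∂μ = M (fB φ (diracSM ω) x))
    (hφ : MeasurePreserving φ μ μ) (e : Set Ω) (he : MeasurableSet e) (hinve : φ ⁻¹' e = e) :
    ∃ N, IsPosF N ∧ (∀ f, 0 ≤ f → N f ≤ M f) ∧ (∀ f, N (shB f) = N f) ∧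
      ∀ x : C(Ω, ℝ), N (fB φ (diracSM ω) x) = ∫ w in e, x w ∂μ := by
  have hε : ∀ k : ℕ, (0 : ℝ) < 1 / ((k : ℝ) + 1) := fun k => by positivity
  choose X X0 X1 XI using fun k : ℕ => exists_approx μ e he (1 / ((k : ℝ) + 1)) (hε k)
  have hi : Integrable (e.indicator (fun _ => (1 : ℝ))) μ := (integrable_const 1).indicator he
  let O : C(Ω, ℝ) → (ℕ →ᵇ ℝ) := fB φ (diracSM ω)
  have hO : ∀ x n, O x n = x (φ^[n] ω) := fB_dirac φ ω
  let F : ℕ → (ℕ →ᵇ ℝ) → ℝ := fun k f => M (f * O (X k))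
  have hF : ∀ k, IsPosF (F k) := fun k => by
    refine ⟨fun f g => ?_, fun r f => ?_, fun f hf => ?_⟩
    · simp only [F, add_mul, hM.add]
    · simp only [F, smul_mul_assoc, hM.smul]
    · refine hM.nonneg _ fun n => ?_
      change 0 ≤ f n * O (X k) n
      rw [hO]
      exact mul_nonneg (hf n) (X0 k _)
  have hFM : ∀ k f, 0 ≤ f → F k f ≤ M f := fun k f hf => hM.mono fun n => by
    rw [BoundedContinuousFunction.mul_apply, hO]
    exact mul_le_of_le_one_right (hf n) (X1 k _)
  have hF1 : ∀ k, F k 1 ≤ 1 := fun k => by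
    rw [← h1]; exact hFM k 1 (fun n => zero_le_one)
  obtain ⟨N, hN⟩ := exists_ulim (hyperfilter ℕ) F (fun f => ‖f‖) (Eventually.of_forall
    fun k f => ((hF k).abs_le f).trans (mul_le_of_le_one_right (norm_nonneg _) (hF1 k)))
  have lim0 : ∀ C : ℝ, Tendsto (fun k : ℕ => C * (1 / ((k : ℝ) + 1))) (hyperfilter ℕ) (𝓝 0) :=
    fun C => by
      have := (tendsto_one_div_add_atTop_nhds_zero_nat (𝕜 := ℝ)).const_mul C
      rw [mul_zero] at this
      exact this.mono_left Nat.hyperfilter_le_atTop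
  refine ⟨N, ulim_posF _ F (Eventually.of_forall hF) N hN, fun f hf =>
    le_of_tendsto (hN f) (Eventually.of_forall fun k => hFM k f hf), fun f => ?_, fun x => ?_⟩
  · have hb : ∀ k, |F k (shB f) - F k f| ≤ (2 * ‖f‖) * (1 / ((k : ℝ) + 1)) := fun k => by
      let D : C(Ω, ℝ) := ⟨fun w => |X k w - X k (φ w)|, by fun_prop⟩
      have e1 : F k (shB f) - F k f = M (shB f * (O (X k) - O ((X k).comp φ))) := by
        simp only [F]
        rw [← hinv (f * O (X k)), ← hM.sub]
        congr 1
        ext n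
        simp only [BoundedContinuousFunction.coe_sub, BoundedContinuousFunction.coe_mul,
          Pi.sub_apply, Pi.mul_apply, shB_apply, hO, ContinuousMap.comp_apply,
          Function.iterate_succ_apply']
        ring
      have e2 : |M (shB f * (O (X k) - O ((X k).comp φ)))| ≤ ‖f‖ * M (O D) := by
        refine hM.abs_le_of _ fun n => ?_
        simp only [BoundedContinuousFunction.coe_sub, BoundedContinuousFunction.coe_mul,
          Pi.sub_apply, Pi.mul_apply, shB_apply, hO, ContinuousMap.comp_apply, abs_mul]
        exact mul_le_mul_of_nonneg_right (f.norm_coe_le_norm _) (abs_nonneg _)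
      have e3 : M (O D) ≤ 2 * (1 / ((k : ℝ) + 1)) := by
        rw [← hμ D]
        have i1 : Integrable (fun w => |e.indicator (fun _ => (1 : ℝ)) w - X k w|) μ :=
          (hi.sub (cint _ _)).abs
        have i2 : Integrable (fun w => |e.indicator (fun _ => (1 : ℝ)) (φ w) - X k (φ w)|) μ :=
          hφ.integrable_comp_of_integrable i1
        have i3 : ∫ w, |e.indicator (fun _ => (1 : ℝ)) (φ w) - X k (φ w)| ∂μ
            = ∫ w, |e.indicator (fun _ => (1 : ℝ)) w - X k w| ∂μ := by
          have := integral_map (μ := μ) (φ := φ) hφ.measurable.aemeasurable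
            (f := fun w => |e.indicator (fun _ => (1 : ℝ)) w - X k w|)
            (by rw [hφ.map_eq]; exact i1.aestronglyMeasurable)
          rw [← this, hφ.map_eq]
        have i4 : ∫ w, D w ∂μ ≤ ∫ w, (|e.indicator (fun _ => (1 : ℝ)) w - X k w| +
            |e.indicator (fun _ => (1 : ℝ)) (φ w) - X k (φ w)|) ∂μ := by
          refine integral_mono (cint _ _) (i1.add i2) fun w => ?_
          have hw : e.indicator (fun _ => (1 : ℝ)) (φ w) = e.indicator (fun _ => (1 : ℝ)) w := by
            have : φ w ∈ e ↔ w ∈ e := by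
              rw [← Set.mem_preimage, hinve]
            by_cases h : w ∈ e
            · rw [Set.indicator_of_mem h, Set.indicator_of_mem (this.2 h)]
            · rw [Set.indicator_of_notMem h, Set.indicator_of_notMem (fun h' => h (this.1 h'))]
          change |X k w - X k (φ w)| ≤ _
          simp only [hw]
          rw [abs_sub_comm (e.indicator (fun _ => (1 : ℝ)) w) (X k w)]
          exact abs_sub_le _ _ _
        rw [integral_add i1 i2, i3] at i4
        linarith [XI k]
      rw [e1]
      calc _ ≤ _ := e2
        _ ≤ ‖f‖ * (2 * (1 / ((k : ℝ) + 1))) := by gcongr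
        _ = _ := by ring
    simp only [← Real.norm_eq_abs] at hb
    have h0 := squeeze_zero_norm hb (lim0 _)
    have h2 := tendsto_nhds_unique h0 ((hN (shB f)).sub (hN f))
    linarith
  · have hb : ∀ k, |F k (O x) - ∫ w in e, x w ∂μ| ≤ ‖x‖ * (1 / ((k : ℝ) + 1)) := fun k => by
      have e1 : F k (O x) = ∫ w, (x * X k) w ∂μ := by
        rw [hμ]
        change M _ = M (O _)
        congr 1
        ext n
        simp only [BoundedContinuousFunction.coe_mul, Pi.mul_apply, hO, ContinuousMap.mul_apply]
      have i0 : Integrable (e.indicator (fun w => x w)) μ := (cint x μ).indicator he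
      rw [e1, ← integral_indicator he, ← integral_sub (cint _ _) i0]
      have i1 : Integrable (fun w => |e.indicator (fun _ => (1 : ℝ)) w - X k w|) μ :=
          (hi.sub (cint _ _)).abs
      rw [← Real.norm_eq_abs]
      refine (norm_integral_le_of_norm_le (i1.const_mul ‖x‖) (Eventually.of_forall fun w => ?_)).trans ?_
      · have : (x * X k) w - e.indicator (fun w => x w) w
            = x w * (X k w - e.indicator (fun _ => (1 : ℝ)) w) := by
          by_cases h : w ∈ e
          · simp only [Set.indicator_of_mem h, ContinuousMap.mul_apply]; ring
          · simp only [Set.indicator_of_notMem h, ContinuousMap.mul_apply]; ring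
        rw [this, norm_mul, Real.norm_eq_abs (X k w - _), abs_sub_comm]
        exact mul_le_mul_of_nonneg_right (x.norm_coe_le_norm _) (abs_nonneg _)
      · rw [integral_const_mul]
        exact mul_le_mul_of_nonneg_left (XI k) (norm_nonneg _)
    simp only [← Real.norm_eq_abs] at hb
    have h0 := squeeze_zero_norm hb (lim0 _)
    have h2 := tendsto_nhds_unique h0 ((hN (O x)).sub_const _)
    change N (O x) = _
    linarith

lemma main_aux (φ : C(Ω, Ω)) (Q : SignedMeasure Ω → SignedMeasure Ω)
    (hQ : Q ∈ Set.extremePoints ℝ (Lker φ)) (ω : Ω) :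
    ∃ μ : Measure Ω, IsErgodicMeasure φ μ ∧
      ∀ e : Set Ω, MeasurableSet e → Q (diracSM ω) e = (μ e).toReal := by
  rw [mem_extremePoints] at hQ
  obtain ⟨hQL, hext⟩ := hQ
  obtain ⟨M, hM, h1, hinv, hMQ⟩ := exists_inv_mean φ Q hQL
  obtain ⟨μ, _, hμ⟩ := exists_op_measure φ M hM (Measure.dirac ω)
  change ∀ x : C(Ω, ℝ), ∫ w, x w ∂μ = M (fB φ (diracSM ω) x) at hμ
  have fone : fB φ (diracSM ω) 1 = 1 := by
    ext n; rw [fB_dirac]; rfl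
  have hprob : IsProbabilityMeasure μ := by
    have := hμ 1
    rw [fone, h1] at this
    simp only [ContinuousMap.one_apply, integral_const, smul_eq_mul, mul_one] at this
    exact ⟨by rw [← ENNReal.ofReal_one, ← this, Measure.real, ENNReal.ofReal_toReal (measure_ne_top _ _)]⟩
  have hm : Measurable φ := φ.continuous.measurable
  have hmp : MeasurePreserving φ μ μ := by
    refine ⟨hm, meas_ext _ _ fun x => ?_⟩
    rw [integral_map hm.aemeasurable x.continuous.measurable.aestronglyMeasurable, hμ x,
      ← hinv, ← fB_comp, ← hμ]
    rfl
  have hQδ : Q (diracSM ω) = μ.toSignedMeasure := by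
    refine spair_ext _ _ fun x => ?_
    rw [hMQ, spair_toSM, hμ]
  refine ⟨μ, ⟨hprob, fun e he => hmp.measure_preimage he.nullMeasurableSet, fun e he hinve => ?_⟩,
    fun e he => ?_⟩
  · by_contra hcon
    push Not at hcon
    obtain ⟨hc0, hc1⟩ := hcon
    obtain ⟨N, hN, hNM, hNs, hNx⟩ := split_mean φ ω M hM h1 hinv μ hμ hmp e he hinve
    set t : ℝ := μ.real e with ht
    have ht0 : 0 < t := by
      rw [ht, Measure.real, ENNReal.toReal_pos_iff]
      exact ⟨pos_iff_ne_zero.2 hc0, measure_lt_top _ _⟩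
    have ht1 : t < 1 := by
      have h2 : μ e < 1 := lt_of_le_of_ne prob_le_one hc1
      have := (ENNReal.toReal_lt_toReal (measure_ne_top μ e) ENNReal.one_ne_top).2 h2
      simpa [ht, Measure.real] using this
    have hN1 : N 1 = t := by
      rw [← fone, hNx]
      simp [ht]
    obtain ⟨Q₁, hQ₁, hQ₁x⟩ := mem_L φ (fun f => t⁻¹ * N f)
      ⟨fun f g => by simp only [hN.add]; ring, fun r f => by simp only [hN.smul]; ring,
        fun f hf => mul_nonneg (by positivity) (hN.nonneg f hf)⟩
      (by simp only [hN1]; field_simp) (fun f => by simp only [hNs])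
    have h1t : 0 < 1 - t := by linarith
    obtain ⟨Q₂, hQ₂, hQ₂x⟩ := mem_L φ (fun f => (1 - t)⁻¹ * (M f - N f))
      ⟨fun f g => by simp only [hN.add, hM.add]; ring,
        fun r f => by simp only [hN.smul, hM.smul]; ring,
        fun f hf => mul_nonneg (by positivity) (sub_nonneg.2 (hNM f hf))⟩
      (by simp only [hN1, h1]; field_simp) (fun f => by simp only [hNs, hinv])
    have hQ1 := (hext Q₁ hQ₁ Q₂ hQ₂ ⟨t, 1 - t, ht0, h1t, by ring, by
      funext ν
      refine spair_ext _ _ fun x => ?_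
      change spair x (t • Q₁ ν + (1 - t) • Q₂ ν) = _
      rw [spair_add, spair_smul, spair_smul, hQ₁x, hQ₂x, hMQ]
      field_simp
      ring⟩).1
    have key : μ.restrict e = t.toNNReal • μ := by
      refine meas_ext _ _ fun x => ?_
      have h3 := hQ₁x (diracSM ω) x
      rw [hQ1, hMQ, ← hμ, hNx] at h3
      rw [integral_smul_nnreal_measure, h3, NNReal.smul_def, Real.coe_toNNReal _ ht0.le, smul_eq_mul]
      field_simp
    have h4 : (μ.restrict e).real e = (t.toNNReal • μ).real e := by rw [key]
    rw [measureReal_restrict_apply he, Set.inter_self, measureReal_nnreal_smul_apply,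
      Real.coe_toNNReal _ ht0.le] at h4
    rw [← ht] at h4
    nlinarith
  · rw [hQδ, Measure.toSignedMeasure_apply_measurable he]
    rfl

end Helpers

/-- Proposition 1.11: if `Q` is an extreme point of the convex set `L`, then for every
`ω ∈ Ω` the measure `Qδ(ω)` is a `φ`-ergodic Borel probability measure. -/
theorem stmt_6 (φ : Ω → Ω) (hφ : Continuous φ)
    (Q : SignedMeasure Ω → SignedMeasure Ω) (hQ : Q ∈ Set.extremePoints ℝ (Lker φ))
    (ω : Ω) :
    ∃ μ : Measure Ω, IsErgodicMeasure φ μ ∧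
      ∀ e : Set Ω, MeasurableSet e → Q (diracSM ω) e = (μ e).toReal := by
  exact main_aux ⟨φ, hφ⟩ Q hQ ω
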